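/- Let G be any group and E a separable dual Banach G-module. Suppose that every countable subset of G is contained in a subgroup G₁ ≤ G such that Hb^n(G₁, E) = 0 for all n ≥ 1 (with E viewed as a G₁-module by restriction). Then Hb^n(G, E) = 0 for all n ≥ 1. -/

import Mathlib

open scoped BigOperators

/-- A cochain (function into a normed space) is bounded if its norms are uniformly bounded. -/
def IsBddCochain {G : Type*} {E : Type*} [NormedAddCommGroup E] {n : ℕ}
    (f : (Fin n → G) → E) : Prop :=
  ∃ C : ℝ, ∀ g, ‖f g‖ ≤ C

/-- The inhomogeneous coboundary operator of bounded cohomology, for an action `π` of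
`G` on `E`:
`(δf)(g₁,…,g_{n+1}) = g₁•f(g₂,…,g_{n+1}) + ∑_{i=1}^{n} (−1)^i f(g₁,…,g_i·g_{i+1},…,g_{n+1})`
`+ (−1)^{n+1} f(g₁,…,g_n)`. -/
def bddDelta {G : Type*} [Group G] {E : Type*} [NormedAddCommGroup E] [Module ℝ E]
    (π : G → E → E) (n : ℕ) (f : (Fin n → G) → E) : (Fin (n + 1) → G) → E :=
  fun g =>
    π (g 0) (f (fun j => g j.succ)) +
    (∑ i : Fin n, ((-1 : ℝ) ^ ((i : ℕ) + 1)) •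
      f (fun j => if (j : ℕ) < (i : ℕ) then g (Fin.castSucc j)
        else if (j : ℕ) = (i : ℕ) then g (Fin.castSucc j) * g j.succ
        else g j.succ)) +
    ((-1 : ℝ) ^ (n + 1)) • f (fun j => g (Fin.castSucc j))

/-- Vanishing of the bounded cohomology `Hb^n(G,E)` for all `n ≥ 1`, with respect to the
`G`-action `π` on `E`: every bounded cocycle of degree `n ≥ 1` is the coboundary of a
bounded cochain. -/
def HbVanish {G : Type*} [Group G] {E : Type*} [NormedAddCommGroup E] [Module ℝ E]
    (π : G → E → E) : Prop :=
  ∀ (n : ℕ) (f : (Fin (n + 1) → G) → E), IsBddCochain f →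
    bddDelta π (n + 1) f = 0 →
    ∃ b : (Fin n → G) → E, IsBddCochain b ∧ bddDelta π n b = f

/-- A group is boundedly acyclic if `Hb^n(G,ℝ) = 0` for all `n ≥ 1`, where `ℝ` carries
the trivial `G`-action. -/
def BoundedlyAcyclic (G : Type*) [Group G] : Prop :=
  HbVanish (G := G) (E := ℝ) (fun _ v => v)

/-- The contragredient action of `G` on the continuous dual of `F` induced by an
isometric action `ρ` of `G` on `F`: `(g • φ)(v) = φ (g⁻¹ • v)`. -/
def contragredient {G : Type*} [Group G] {F : Type*} [NormedAddCommGroup F]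
    [NormedSpace ℝ F] (ρ : G →* (F ≃ₗᵢ[ℝ] F)) : G → (F →L[ℝ] ℝ) → (F →L[ℝ] ℝ) :=
  fun g φ => φ.comp (ρ g⁻¹).toLinearIsometry.toContinuousLinearMap

/-!
Given a bounded cocycle `f`, the bounds on its primitives over countable subsets of `G` are
uniform: if each `K : ℕ` failed on some countable set `C K`, then the countable set `⋃ K, C K`
would admit no bounded primitive at all. By Banach–Alaoglu, the primitives over finite subsets,
all bounded by this common `K`, converge weak-* along an ultrafilter refining the directed set of
finite subsets; the contragredient action is weak-* continuous, so the limit is a primitive of `f`.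
-/

open Filter Topology

theorem exists_forall_countable_of_antitone {α ι : Type*} [Countable ι] {P : ι → Set α → Prop}
    (hP : ∀ i, Antitone (P i)) (h : ∀ C : Set α, C.Countable → ∃ i, P i C) :
    ∃ i, ∀ C : Set α, C.Countable → P i C := by
  by_contra! hfail
  choose C hC hCP using hfail
  obtain ⟨i, hi⟩ := h (⋃ i, C i) (Set.countable_iUnion hC)
  exact hCP i (hP i (Set.subset_iUnion C i) hi)

theorem exists_norm_le_tendsto_apply_of_ultrafilter {𝕜 F ι : Type*} [NontriviallyNormedField 𝕜]
    [ProperSpace 𝕜] [SeminormedAddCommGroup F] [NormedSpace 𝕜 F] (U : Ultrafilter ι)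
    {φ : ι → StrongDual 𝕜 F} {K : ℝ} (hφ : ∀ᶠ i in U, ‖φ i‖ ≤ K) :
    ∃ ψ : StrongDual 𝕜 F, ‖ψ‖ ≤ K ∧ ∀ v, Tendsto (fun i => φ i v) U (𝓝 (ψ v)) := by
  obtain ⟨ψ, hψ, hlim⟩ :=
    (WeakDual.isCompact_closedBall (𝕜 := 𝕜) (E := F) 0 K).ultrafilter_le_nhds
      (U.map fun i => StrongDual.toWeakDual (φ i)) <|
        le_principal_iff.2 <| hφ.mono fun i hi => mem_closedBall_zero_iff.2 hi
  exact ⟨WeakDual.toStrongDual ψ, by simpa using hψ,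
    fun v => ((WeakDual.eval_continuous v).tendsto ψ).comp hlim⟩

section Coboundary

variable {G : Type*} [Group G] {n : ℕ}

section Primitive

variable {E : Type*} [NormedAddCommGroup E] [Module ℝ E] {π : G → E → E}

theorem bddDelta_comp_monoidHom {H : Type*} [Group H] (φ : H →* G) (π : G → E → E)
    (f : (Fin n → G) → E) (h : Fin (n + 1) → H) :
    bddDelta π n f (φ ∘ h) = bddDelta (π ∘ φ) n (fun x => f (φ ∘ x)) h := by
  simp only [bddDelta, Function.comp_def, apply_ite φ, map_mul]

/-- `f` has a primitive over `S`, bounded by `K`: a cochain `b` of norm at most `K` such that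
`δb` and `f` agree on tuples of elements of `S`. The cochain `b` is defined on all of `G`, because
`δb` on such tuples also involves products of elements of `S`. -/
def HasBddPrimitiveOn (π : G → E → E) (f : (Fin (n + 1) → G) → E) (K : ℝ) (S : Set G) : Prop :=
  ∃ b : (Fin n → G) → E, (∀ x, ‖b x‖ ≤ K) ∧ ∀ g, (∀ j, g j ∈ S) → bddDelta π n b g = f g

theorem HasBddPrimitiveOn.antitone (π : G → E → E) (f : (Fin (n + 1) → G) → E) (K : ℝ) :
    Antitone (HasBddPrimitiveOn π f K) :=
  fun _ _ hST ⟨b, hbK, hb⟩ => ⟨b, hbK, fun g hg => hb g fun j => hST (hg j)⟩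

theorem HasBddPrimitiveOn.mono_bound {f : (Fin (n + 1) → G) → E} {K L : ℝ} {S : Set G}
    (h : HasBddPrimitiveOn π f K S) (hKL : K ≤ L) : HasBddPrimitiveOn π f L S :=
  let ⟨b, hbK, hb⟩ := h
  ⟨b, fun x => (hbK x).trans hKL, hb⟩

theorem HbVanish.exists_hasBddPrimitiveOn_subgroup {G₁ : Subgroup G}
    (hG₁ : HbVanish (π ∘ G₁.subtype)) {f : (Fin (n + 1) → G) → E} (hf : IsBddCochain f)
    (hδf : bddDelta π (n + 1) f = 0) : ∃ K, HasBddPrimitiveOn π f K G₁ := by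
  obtain ⟨M, hM⟩ := hf
  have hδf₁ : bddDelta (π ∘ G₁.subtype) (n + 1) (fun x => f (G₁.subtype ∘ x)) = 0 := by
    funext g
    rw [← bddDelta_comp_monoidHom, hδf, Pi.zero_apply, Pi.zero_apply]
  obtain ⟨b, ⟨K, hbK⟩, hb⟩ := hG₁ n _ ⟨M, fun x => hM _⟩ hδf₁
  -- Composing with a retraction `G → G₁` extends `b` to `G` without changing its bound.
  let r : G → G₁ := Function.invFun G₁.subtype
  have hr : Function.LeftInverse r G₁.subtype :=
    Function.leftInverse_invFun G₁.subtype_injective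
  refine ⟨K, fun x => b (r ∘ x), fun x => hbK _, fun g hg => ?_⟩
  lift g to Fin (n + 1) → G₁ using hg
  calc bddDelta π n (fun x => b (r ∘ x)) (G₁.subtype ∘ g)
      = bddDelta (π ∘ G₁.subtype) n b g := by
        simp only [bddDelta_comp_monoidHom, ← Function.comp_assoc, hr.comp_eq_id,
          Function.id_comp]
    _ = f (G₁.subtype ∘ g) := congrFun hb g

end Primitive

section Contragredient

variable {F : Type*} [NormedAddCommGroup F] [NormedSpace ℝ F] {ρ : G →* (F ≃ₗᵢ[ℝ] F)}

theorem contragredient_comp {H : Type*} [Group H] (ρ : G →* (F ≃ₗᵢ[ℝ] F)) (φ : H →* G) :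
    contragredient (ρ.comp φ) = contragredient ρ ∘ φ := by
  ext h ψ v
  simp only [contragredient, MonoidHom.comp_apply, map_inv, Function.comp_apply]

theorem tendsto_bddDelta_contragredient_apply {ι : Type*} {l : Filter ι}
    {b : ι → (Fin n → G) → StrongDual ℝ F} {b' : (Fin n → G) → StrongDual ℝ F}
    (hb : ∀ x v, Tendsto (fun i => b i x v) l (𝓝 (b' x v))) (g : Fin (n + 1) → G) (v : F) :
    Tendsto (fun i => bddDelta (contragredient ρ) n (b i) g v) l
      (𝓝 (bddDelta (contragredient ρ) n b' g v)) := by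
  simp only [bddDelta, contragredient, add_apply,
    sum_apply, smul_apply,
    ContinuousLinearMap.comp_apply]
  exact ((hb _ _).add (tendsto_finsetSum _ fun i _ => (hb _ _).const_smul _)).add
    ((hb _ _).const_smul _)

theorem HasBddPrimitiveOn.univ_of_finset {f : (Fin (n + 1) → G) → StrongDual ℝ F} {K : ℝ}
    (h : ∀ S : Finset G, HasBddPrimitiveOn (contragredient ρ) f K S) :
    HasBddPrimitiveOn (contragredient ρ) f K Set.univ := by
  classical
  choose b hbK hb using h
  let U : Ultrafilter (Finset G) := Ultrafilter.of atTop
  choose b' hb'K hlim using fun x =>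
    exists_norm_le_tendsto_apply_of_ultrafilter U (.of_forall fun S => hbK S x)
  refine ⟨b', hb'K, fun g _ => ContinuousLinearMap.ext fun v => ?_⟩
  have hmem : ∀ᶠ S in (U : Filter (Finset G)), ∀ j, g j ∈ S :=
    Ultrafilter.of_le _ <| (eventually_ge_atTop (Finset.univ.image g)).mono
      fun S hS j => hS (Finset.mem_image_of_mem g (Finset.mem_univ j))
  have heq : ∀ᶠ S in (U : Filter (Finset G)),
      bddDelta (contragredient ρ) n (b S) g v = f g v :=
    hmem.mono fun S hS => by rw [hb S g hS]
  exact tendsto_nhds_unique_of_eventuallyEq (tendsto_bddDelta_contragredient_apply hlim g v)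
    tendsto_const_nhds heq

theorem HasBddPrimitiveOn.exists_univ_of_countable {f : (Fin (n + 1) → G) → StrongDual ℝ F}
    (h : ∀ C : Set G, C.Countable → ∃ K, HasBddPrimitiveOn (contragredient ρ) f K C) :
    ∃ K, HasBddPrimitiveOn (contragredient ρ) f K Set.univ := by
  have hnat : ∀ C : Set G, C.Countable →
      ∃ K : ℕ, HasBddPrimitiveOn (contragredient ρ) f K C := fun C hC =>
    let ⟨K, hK⟩ := h C hC
    let ⟨N, hKN⟩ := exists_nat_ge K
    ⟨N, hK.mono_bound hKN⟩
  obtain ⟨K, hK⟩ := exists_forall_countable_of_antitone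
    (fun K : ℕ => HasBddPrimitiveOn.antitone (contragredient ρ) f K) hnat
  exact ⟨K, .univ_of_finset fun S => hK S S.countable_toSet⟩

end Contragredient

end Coboundary

theorem vanishing_from_countable_subgroups_general {G : Type*} [Group G]
    (F : Type*) [NormedAddCommGroup F] [NormedSpace ℝ F] (ρ : G →* (F ≃ₗᵢ[ℝ] F))
    (h : ∀ C : Set G, C.Countable → ∃ G₁ : Subgroup G, C ⊆ G₁ ∧
      HbVanish (contragredient (ρ.comp G₁.subtype))) :
    HbVanish (contragredient ρ) := by
  intro n f hf hδf
  have hcountable : ∀ C : Set G, C.Countable →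
      ∃ K, HasBddPrimitiveOn (contragredient ρ) f K C := by
    intro C hC
    obtain ⟨G₁, hCG₁, hG₁⟩ := h C hC
    rw [contragredient_comp] at hG₁
    obtain ⟨K, hK⟩ := hG₁.exists_hasBddPrimitiveOn_subgroup hf hδf
    exact ⟨K, HasBddPrimitiveOn.antitone _ _ _ hCG₁ hK⟩
  obtain ⟨K, b, hbK, hb⟩ := HasBddPrimitiveOn.exists_univ_of_countable hcountable
  exact ⟨b, ⟨K, hbK⟩, funext fun g => hb g fun _ => Set.mem_univ _⟩

/-- Let `E = F*` be a separable dual Banach `G`-module.  If every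
countable subset of `G` is contained in a subgroup `G₁ ≤ G` with `Hb^n(G₁,E) = 0` for
all `n ≥ 1` (for the restricted action), then `Hb^n(G,E) = 0` for all `n ≥ 1`. -/
theorem vanishing_from_countable_subgroups.{u}
    {G : Type*} [Group G]
    (F : Type u) [NormedAddCommGroup F] [NormedSpace ℝ F] [CompleteSpace F]
    (ρ : G →* (F ≃ₗᵢ[ℝ] F))
    (hsep : TopologicalSpace.SeparableSpace (F →L[ℝ] ℝ))
    (h : ∀ C : Set G, C.Countable → ∃ G₁ : Subgroup G, C ⊆ G₁ ∧
      HbVanish (contragredient (ρ.comp G₁.subtype))) :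
    HbVanish (contragredient ρ) :=
  vanishing_from_countable_subgroups_general F ρ h
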